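/- There exists a constant C > 0 such that for every continuously differentiable function u : ℝ³ → ℝ with ∫_{ℝ³}(|∇u|² + u²) dx < ∞, the double integral ∫_{ℝ³}∫_{ℝ³} u(x)² u(y)² / |x − y| dy dx is finite and satisfies ∫_{ℝ³}∫_{ℝ³} u(x)² u(y)² / |x − y| dy dx ≤ C (∫_{ℝ³}(|∇u|² + u²) dx)². -/

import Mathlib

/-!
The heart of the matter is the uniform bound on the Newtonian potential
`∫ u(y)² / |x - y| dy ≤ 2 ∫ (|∇u|² + u²)`, valid for every `x`; multiplying it by `u(x)²` and
integrating in `x` gives the theorem with `C = 2`, since `∫ u² ≤ ∫ (|∇u|² + u²)`.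

The bound is a Hardy-type inequality, and it follows from scaling alone. After a translation take
`x = 0`, and write `A = ∫ v(y)² / |y| dy`. The fundamental theorem of calculus on the segment from
`y` to `2y` gives `v(y)² ≤ v(2y)² + |y| ∫₁² (|∇v|² + v²)(ty) dt`. Dividing by `|y|` and
integrating, the first term becomes `A / 4` by the change of variables `z = 2y` and the second is
at most `∫ (|∇v|² + v²)`, because dilations by `t ≥ 1` do not increase integrals. Hence
`A ≤ (4/3) ∫ (|∇v|² + v²)`, provided `A` is finite. To guarantee finiteness, the kernel `1 / |y|`
is first replaced by `1 / (|y| + δ)`, which is bounded and still satisfies the required scaling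
inequality; Fatou's lemma then lets `δ → 0`.
-/

noncomputable section
open MeasureTheory Filter Metric
open scoped Topology RealInnerProductSpace ENNReal NNReal

abbrev R3 : Type := EuclideanSpace ℝ (Fin 3)

/-- Smooth compactly supported real functions on ℝ³. -/
def IsTest (u : R3 → ℝ) : Prop := ContDiff ℝ (⊤ : ℕ∞) u ∧ HasCompactSupport u

/-- Finiteness of the H¹-type integral `∫ (|∇u|² + u²)`. -/
def H1Fin (u : R3 → ℝ) : Prop :=
  (∫⁻ x : R3, ENNReal.ofReal (‖gradient u x‖ ^ 2 + (u x) ^ 2)) < ⊤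

/-- The functional `I_{μ,ν}`. -/
def Imn (μ ν q : ℝ) (u : R3 → ℝ) : ℝ :=
  (1 / 2) * ∫ x : R3, (‖gradient u x‖ ^ 2 + μ * (u x) ^ 2)
    + (ν ^ 2 / 4) * ∫ x : R3, ∫ y : R3, (u x) ^ 2 * (u y) ^ 2 / dist x y
    - (1 / q) * ∫ x : R3, |u x| ^ q

/-- The mountain-pass (minimax) value `c_{μ,ν}`. -/
def mp (μ ν q : ℝ) : ℝ :=
  sInf { m | ∃ u : R3 → ℝ, IsTest u ∧ u ≠ 0 ∧
    m = sSup { v | ∃ t : ℝ, 0 < t ∧ v = Imn μ ν q fun x => t * u x } }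

/-- Pointwise Laplacian, as the trace of the second derivative. -/
def lap (u : R3 → ℝ) (x : R3) : ℝ :=
  ∑ i : Fin 3, iteratedFDeriv ℝ 2 u x ![EuclideanSpace.single i 1, EuclideanSpace.single i 1]

/-- `liminf` of a potential at infinity. -/
def Vlim (V : R3 → ℝ) : ℝ := liminf V (cocompact R3)

def Cfun (V K : R3 → ℝ) (q : ℝ) (ξ : R3) : ℝ := mp (V ξ) (K ξ) q

def Cinf (V K : R3 → ℝ) (q : ℝ) : ℝ := mp (Vlim V) (Vlim K) q

def H0cond (V K : R3 → ℝ) : Prop := ∃ α > 0, ∀ x : R3, α ≤ V x ∧ α ≤ K x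

def H1cond (V K : R3 → ℝ) : Prop := (⨅ x : R3, V x) < Vlim V ∧ (⨅ x : R3, K x) < Vlim K

def BddCont (V : R3 → ℝ) : Prop := Continuous V ∧ ∃ M : ℝ, ∀ x : R3, |V x| ≤ M

def phiEps (K : R3 → ℝ) (ε : ℝ) (u : R3 → ℝ) (x : R3) : ℝ :=
  ∫ y : R3, K (ε • y) * (u y) ^ 2 / dist x y

def Ieps (V K : R3 → ℝ) (q ε : ℝ) (u : R3 → ℝ) : ℝ :=
  (1 / 2) * ∫ x : R3, (‖gradient u x‖ ^ 2 + V (ε • x) * (u x) ^ 2)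
    + (ε ^ 2 / 4) * ∫ x : R3, ∫ y : R3,
        K (ε • x) * K (ε • y) * (u x) ^ 2 * (u y) ^ 2 / dist x y
    - (1 / q) * ∫ x : R3, |u x| ^ q

def cEps (V K : R3 → ℝ) (q ε : ℝ) : ℝ :=
  sInf { m | ∃ u : R3 → ℝ, IsTest u ∧ u ≠ 0 ∧
    m = sSup { v | ∃ t : ℝ, 0 < t ∧ v = Ieps V K q ε fun x => t * u x } }

/-- `u` is a weak solution of the rescaled equation `(S_ε)`. -/
def WeakSol (V K : R3 → ℝ) (q ε : ℝ) (u : R3 → ℝ) : Prop :=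
  ContDiff ℝ 1 u ∧ H1Fin u ∧
  ∀ ψ : R3 → ℝ, IsTest ψ →
    (∫ x : R3, (⟪gradient u x, gradient ψ x⟫ + V (ε • x) * u x * ψ x))
      + ε ^ 2 * ∫ x : R3, K (ε • x) * phiEps K ε u x * u x * ψ x
    = ∫ x : R3, |u x| ^ (q - 2) * u x * ψ x

/-- All integrals appearing in `Ieps V K q ε u` are finite. -/
def IepsFin (V K : R3 → ℝ) (q ε : ℝ) (u : R3 → ℝ) : Prop :=
  (∫⁻ x : R3, ENNReal.ofReal (‖gradient u x‖ ^ 2 + V (ε • x) * (u x) ^ 2)) < ⊤ ∧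
  (∫⁻ x : R3, ∫⁻ y : R3, ENNReal.ofReal
      (K (ε • x) * K (ε • y) * (u x) ^ 2 * (u y) ^ 2 / dist x y)) < ⊤ ∧
  (∫⁻ x : R3, ENNReal.ofReal (|u x| ^ q)) < ⊤

def phiK (K v : R3 → ℝ) (x : R3) : ℝ := ∫ y : R3, K y * (v y) ^ 2 / dist x y

/-- The energy density `|∇u|² + u²`. -/
def eDens (u : R3 → ℝ) (x : R3) : ℝ := ‖gradient u x‖ ^ 2 + (u x) ^ 2

lemma eDens_nonneg (u : R3 → ℝ) (x : R3) : 0 ≤ eDens u x := by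
  unfold eDens; positivity

lemma norm_gradient_eq (u : R3 → ℝ) (x : R3) : ‖gradient u x‖ = ‖fderiv ℝ u x‖ := by
  simp [gradient]

lemma continuous_eDens {u : R3 → ℝ} (hu : ContDiff ℝ 1 u) : Continuous (eDens u) := by
  have h1 : Continuous (fderiv ℝ u) := hu.continuous_fderiv (by norm_num)
  have h2 := hu.continuous
  have : eDens u = fun x => ‖fderiv ℝ u x‖ ^ 2 + (u x) ^ 2 := by
    ext x; rw [eDens, norm_gradient_eq]
  rw [this]
  fun_prop

/-- The fundamental theorem of calculus for `t ↦ v(ty)²` on `[1, 2]`, with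
`2 |v ∇v| ≤ |∇v|² + v²`. -/
lemma sq_le_sq_dilate {v : R3 → ℝ} (hv : ContDiff ℝ 1 v) (y : R3) :
    (v y) ^ 2 ≤ (v ((2 : ℝ) • y)) ^ 2 + ‖y‖ * ∫ t in (1 : ℝ)..2, eDens v (t • y) := by
  have hd : ∀ t : ℝ, HasDerivAt (fun s : ℝ => (v (s • y)) ^ 2)
      (2 * v (t • y) * fderiv ℝ v (t • y) y) t := by
    intro t
    have h1 : HasDerivAt (fun s : ℝ => s • y) y t := by
      simpa using (hasDerivAt_id t).smul_const y
    have h2 := ((hv.differentiable (by norm_num)) (t • y)).hasFDerivAt.comp_hasDerivAt t h1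
    exact (h2.pow 2).congr_deriv (by simp)
  have hc1 : Continuous (fderiv ℝ v) := hv.continuous_fderiv (by norm_num)
  have hc2 := hv.continuous
  have hc3 := continuous_eDens hv
  have hcont : Continuous fun t : ℝ => 2 * v (t • y) * fderiv ℝ v (t • y) y := by fun_prop
  have hftc := intervalIntegral.integral_eq_sub_of_hasDerivAt (a := 1) (b := 2)
    (fun t _ => hd t) (hcont.intervalIntegrable _ _)
  have hle : ∫ t in (1 : ℝ)..2, -(2 * v (t • y) * fderiv ℝ v (t • y) y)
      ≤ ∫ t in (1 : ℝ)..2, ‖y‖ * eDens v (t • y) := by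
    apply intervalIntegral.integral_mono_on (by norm_num)
      (hcont.neg.intervalIntegrable _ _)
      (Continuous.intervalIntegrable (by fun_prop) _ _)
    intro t _
    have h1 := (fderiv ℝ v (t • y)).le_opNorm y
    rw [Real.norm_eq_abs] at h1
    rw [eDens, norm_gradient_eq]
    set a := v (t • y)
    set D := ‖fderiv ℝ v (t • y)‖
    calc -(2 * a * fderiv ℝ v (t • y) y) ≤ |2 * a * fderiv ℝ v (t • y) y| := neg_le_abs _
      _ = 2 * |a| * |fderiv ℝ v (t • y) y| := by rw [abs_mul, abs_mul]; norm_num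
      _ ≤ 2 * |a| * (D * ‖y‖) := by gcongr
      _ = ‖y‖ * (2 * D * |a|) := by ring
      _ ≤ ‖y‖ * (D ^ 2 + |a| ^ 2) := by gcongr; exact two_mul_le_add_sq _ _
      _ = ‖y‖ * (D ^ 2 + a ^ 2) := by rw [sq_abs]
  rw [intervalIntegral.integral_neg, hftc, intervalIntegral.integral_const_mul] at hle
  simp only [one_smul] at hle
  linarith

lemma lintegral_dilate (f : R3 → ℝ≥0∞) (hf : Measurable f) {t : ℝ} (ht : 0 < t) :
    ∫⁻ y, f (t • y) = ENNReal.ofReal ((t ^ 3)⁻¹) * ∫⁻ y, f y := by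
  have h := Measure.map_addHaar_smul (volume : Measure R3) ht.ne'
  rw [← lintegral_map hf (measurable_const_smul t), h, lintegral_smul_measure]
  simp [abs_of_pos ht]

/-- Hardy-type bound with the regularised kernel `1 / (|y| + δ)`: boundedness of the kernel makes the
left side `A` finite, so the scaling inequality `A ≤ A / 4 + ∫ (|∇v|² + v²)` can be solved for it. -/
lemma hardy_reg {v : R3 → ℝ} (hv : ContDiff ℝ 1 v)
    (hE : ∫⁻ x, ENNReal.ofReal (eDens v x) < ⊤) {δ : ℝ} (hδ : 0 < δ) :
    ∫⁻ y, ENNReal.ofReal ((v y) ^ 2 / (‖y‖ + δ)) ≤ 2 * ∫⁻ x, ENNReal.ofReal (eDens v x) := by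
  have hc := hv.continuous
  have hce := continuous_eDens hv
  have hpos : ∀ y : R3, 0 < ‖y‖ + δ := fun y => by positivity
  have hcφ : Continuous fun y : R3 => (v y) ^ 2 / (‖y‖ + δ) :=
    Continuous.div (by fun_prop) (by fun_prop) fun y => (hpos y).ne'
  set φ : R3 → ℝ≥0∞ := fun y => ENNReal.ofReal ((v y) ^ 2 / (‖y‖ + δ)) with hφ
  set E := ∫⁻ x, ENNReal.ofReal (eDens v x) with hEdef
  have hmφ : Measurable φ := hcφ.measurable.ennreal_ofReal
  have hme : Measurable fun x => ENNReal.ofReal (eDens v x) := hce.measurable.ennreal_ofReal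
  have hpt : ∀ y, φ y ≤ 2 * φ ((2 : ℝ) • y)
      + ∫⁻ t in Set.Ioc (1 : ℝ) 2, ENNReal.ofReal (eDens v (t • y)) := by
    intro y
    have hI : ENNReal.ofReal (∫ t in (1 : ℝ)..2, eDens v (t • y))
        = ∫⁻ t in Set.Ioc (1 : ℝ) 2, ENNReal.ofReal (eDens v (t • y)) := by
      rw [intervalIntegral.integral_of_le (by norm_num)]
      apply ofReal_integral_eq_lintegral_ofReal
      · exact (Continuous.integrableOn_Icc (by fun_prop)).mono_set Set.Ioc_subset_Icc_self
      · exact Eventually.of_forall fun t => eDens_nonneg _ _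
    have hI0 : 0 ≤ ∫ t in (1 : ℝ)..2, eDens v (t • y) :=
      intervalIntegral.integral_nonneg (by norm_num) fun t _ => eDens_nonneg _ _
    have hreal : (v y) ^ 2 / (‖y‖ + δ) ≤ 2 * ((v ((2 : ℝ) • y)) ^ 2 / (‖(2 : ℝ) • y‖ + δ))
        + ∫ t in (1 : ℝ)..2, eDens v (t • y) := by
      have h := sq_le_sq_dilate hv y
      set J := ∫ t in (1 : ℝ)..2, eDens v (t • y)
      set b := (v ((2 : ℝ) • y)) ^ 2 with hb
      have hb0 : 0 ≤ b := by positivity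
      have hn : ‖(2 : ℝ) • y‖ = 2 * ‖y‖ := by rw [norm_smul]; norm_num
      have h1 : b / (‖y‖ + δ) ≤ 2 * (b / (‖(2 : ℝ) • y‖ + δ)) := by
        rw [hn, ← mul_div_assoc, div_le_div_iff₀ (hpos y) (by positivity)]
        nlinarith [mul_nonneg hb0 hδ.le]
      have h2 : ‖y‖ * J / (‖y‖ + δ) ≤ J := by
        rw [div_le_iff₀ (hpos y)]
        nlinarith [mul_nonneg hI0 hδ.le]
      calc (v y) ^ 2 / (‖y‖ + δ) ≤ (b + ‖y‖ * J) / (‖y‖ + δ) := by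
            gcongr
        _ = b / (‖y‖ + δ) + ‖y‖ * J / (‖y‖ + δ) := add_div _ _ _
        _ ≤ _ := add_le_add h1 h2
    calc φ y ≤ ENNReal.ofReal (2 * ((v ((2 : ℝ) • y)) ^ 2 / (‖(2 : ℝ) • y‖ + δ))
        + ∫ t in (1 : ℝ)..2, eDens v (t • y)) := ENNReal.ofReal_le_ofReal hreal
      _ = _ := by
        rw [ENNReal.ofReal_add (by positivity) hI0, hI, ENNReal.ofReal_mul (by norm_num)]
        simp [hφ]
  have hfin : ∫⁻ y, φ y ≠ ⊤ := by
    have : ∫⁻ y, φ y ≤ ENNReal.ofReal δ⁻¹ * E := by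
      rw [hEdef, ← lintegral_const_mul _ hme]
      refine lintegral_mono fun y => ?_
      simp only [hφ]
      rw [← ENNReal.ofReal_mul (by positivity)]
      apply ENNReal.ofReal_le_ofReal
      rw [div_eq_inv_mul]
      have h1 : (v y) ^ 2 ≤ eDens v y := by unfold eDens; nlinarith [sq_nonneg ‖gradient v y‖]
      have h2 : δ ≤ ‖y‖ + δ := by simp
      gcongr
    exact (this.trans_lt (ENNReal.mul_lt_top ENNReal.ofReal_lt_top hE)).ne
  have hdil : ∫⁻ y, φ ((2 : ℝ) • y) = ENNReal.ofReal (1 / 8) * ∫⁻ y, φ y := by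
    rw [lintegral_dilate φ hmφ (by norm_num)]; norm_num
  have hseg : ∫⁻ y : R3, ∫⁻ t in Set.Ioc (1 : ℝ) 2, ENNReal.ofReal (eDens v (t • y)) ≤ E := by
    rw [lintegral_lintegral_swap]
    · calc ∫⁻ t in Set.Ioc (1 : ℝ) 2, ∫⁻ y : R3, ENNReal.ofReal (eDens v (t • y))
          ≤ ∫⁻ t in Set.Ioc (1 : ℝ) 2, E := by
            refine setLIntegral_mono measurable_const fun t ht => ?_
            rw [lintegral_dilate _ hme (by linarith [ht.1])]
            refine mul_le_of_le_one_left (zero_le) ?_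
            rw [← ENNReal.ofReal_one]
            exact ENNReal.ofReal_le_ofReal (inv_le_one_of_one_le₀ (one_le_pow₀ ht.1.le))
        _ = E := by norm_num
    · have : Continuous fun p : R3 × ℝ => eDens v (p.2 • p.1) := by fun_prop
      exact this.measurable.ennreal_ofReal.aemeasurable
  have hmain : ∫⁻ y, φ y ≤ 2 * (ENNReal.ofReal (1 / 8) * ∫⁻ y, φ y) + E := by
    calc ∫⁻ y, φ y ≤ ∫⁻ y, (2 * φ ((2 : ℝ) • y)
          + ∫⁻ t in Set.Ioc (1 : ℝ) 2, ENNReal.ofReal (eDens v (t • y))) := lintegral_mono hpt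
      _ = 2 * (ENNReal.ofReal (1 / 8) * ∫⁻ y, φ y)
          + ∫⁻ y : R3, ∫⁻ t in Set.Ioc (1 : ℝ) 2, ENNReal.ofReal (eDens v (t • y)) := by
        have hm2 : Measurable fun y => φ ((2 : ℝ) • y) := hmφ.comp (measurable_const_smul _)
        rw [lintegral_add_left (hm2.const_mul 2), lintegral_const_mul _ hm2, hdil]
      _ ≤ _ := by gcongr
  -- Both `A` and `E` are finite, so `A ≤ A / 4 + E` can be solved for `A` in `ℝ`.
  generalize hA : ∫⁻ y, φ y = A at *
  lift A to ℝ≥0 using hfin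
  clear_value E
  lift E to ℝ≥0 using hE.ne
  have h8 : ENNReal.ofReal (1 / 8) = ((1 / 8 : ℝ≥0) : ℝ≥0∞) := by
    rw [ENNReal.ofReal, Real.toNNReal_div zero_le_one]; simp
  rw [h8] at hmain
  norm_cast at hmain ⊢
  rw [← NNReal.coe_le_coe] at hmain ⊢
  push_cast at hmain ⊢
  linarith [A.coe_nonneg, E.coe_nonneg]

/-- Letting `δ → 0` by Fatou's lemma. At `y = 0` the quotient is `0`, which is harmless. -/
lemma hardy {v : R3 → ℝ} (hv : ContDiff ℝ 1 v)
    (hE : ∫⁻ x, ENNReal.ofReal (eDens v x) < ⊤) :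
    ∫⁻ y, ENNReal.ofReal ((v y) ^ 2 / ‖y‖) ≤ 2 * ∫⁻ x, ENNReal.ofReal (eDens v x) := by
  have hc := hv.continuous
  have hpos : ∀ n : ℕ, (0 : ℝ) < 1 / ((n : ℝ) + 1) := fun n => by positivity
  calc ∫⁻ y, ENNReal.ofReal ((v y) ^ 2 / ‖y‖)
      ≤ ∫⁻ y, liminf (fun n : ℕ => ENNReal.ofReal ((v y) ^ 2 / (‖y‖ + 1 / ((n : ℝ) + 1)))) atTop := by
        refine lintegral_mono fun y => ?_
        rcases eq_or_ne y 0 with rfl | hy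
        · simp
        · refine (Tendsto.liminf_eq ?_).ge
          refine (ENNReal.continuous_ofReal.tendsto _).comp ?_
          have h := (tendsto_const_nhds (x := ‖y‖)).add
            (tendsto_one_div_add_atTop_nhds_zero_nat (𝕜 := ℝ))
          rw [add_zero] at h
          exact tendsto_const_nhds.div h (norm_ne_zero_iff.mpr hy)
    _ ≤ liminf (fun n : ℕ => ∫⁻ y, ENNReal.ofReal ((v y) ^ 2 / (‖y‖ + 1 / ((n : ℝ) + 1)))) atTop :=
        lintegral_liminf_le fun n => by
          apply Measurable.ennreal_ofReal
          have := hc.measurable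
          fun_prop
    _ ≤ liminf (fun _ : ℕ => 2 * ∫⁻ x, ENNReal.ofReal (eDens v x)) atTop :=
        liminf_le_liminf (Eventually.of_forall fun n => hardy_reg hv hE (hpos n))
    _ = _ := liminf_const _

/-- The Newtonian potential of `u²` is bounded, uniformly in the base point. -/
lemma potential_le {u : R3 → ℝ} (hu : ContDiff ℝ 1 u)
    (hE : ∫⁻ x, ENNReal.ofReal (eDens u x) < ⊤) (x : R3) :
    ∫⁻ y, ENNReal.ofReal ((u y) ^ 2 / dist x y) ≤ 2 * ∫⁻ z, ENNReal.ofReal (eDens u z) := by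
  have hv : ContDiff ℝ 1 fun y => u (x + y) := hu.comp (contDiff_const.add contDiff_id)
  have he : ∀ y, eDens (fun y => u (x + y)) y = eDens u (x + y) := by
    intro y
    simp only [eDens, norm_gradient_eq]
    rw [fderiv_comp_add_left]
  have hEt : ∫⁻ y, ENNReal.ofReal (eDens (fun y => u (x + y)) y)
      = ∫⁻ y, ENNReal.ofReal (eDens u y) := by
    simp only [he]
    exact lintegral_add_left_eq_self (fun y => ENNReal.ofReal (eDens u y)) x
  have h := hardy hv (hEt ▸ hE)
  rw [hEt] at h
  rw [← lintegral_add_left_eq_self _ x]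
  simpa [dist_eq_norm] using h

theorem statement2 :
    ∃ C > 0, ∀ u : R3 → ℝ, ContDiff ℝ 1 u →
      (∫⁻ x : R3, ENNReal.ofReal (‖gradient u x‖ ^ 2 + (u x) ^ 2)) < ⊤ →
      (∫⁻ x : R3, ∫⁻ y : R3, ENNReal.ofReal ((u x) ^ 2 * (u y) ^ 2 / dist x y))
        ≤ ENNReal.ofReal
            (C * (∫ x : R3, (‖gradient u x‖ ^ 2 + (u x) ^ 2)) ^ 2) := by
  refine ⟨2, two_pos, fun u hu hE => ?_⟩
  change ∫⁻ x, ENNReal.ofReal (eDens u x) < ⊤ at hE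
  change _ ≤ ENNReal.ofReal (2 * (∫ x, eDens u x) ^ 2)
  have hce := continuous_eDens hu
  have hnn : 0 ≤ᵐ[volume] eDens u := Eventually.of_forall (eDens_nonneg u)
  have hint : Integrable (eDens u) :=
    ⟨hce.aestronglyMeasurable, (hasFiniteIntegral_iff_ofReal hnn).mpr hE⟩
  rw [ENNReal.ofReal_mul zero_le_two, ENNReal.ofReal_pow (integral_nonneg (eDens_nonneg u)),
    ofReal_integral_eq_lintegral_ofReal hint hnn]
  set E := ∫⁻ x, ENNReal.ofReal (eDens u x)
  have hm : Measurable fun x => ENNReal.ofReal ((u x) ^ 2) :=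
    (hu.continuous.pow 2).measurable.ennreal_ofReal
  calc ∫⁻ x : R3, ∫⁻ y : R3, ENNReal.ofReal ((u x) ^ 2 * (u y) ^ 2 / dist x y)
      = ∫⁻ x : R3, ENNReal.ofReal ((u x) ^ 2)
          * ∫⁻ y : R3, ENNReal.ofReal ((u y) ^ 2 / dist x y) := by
        refine lintegral_congr fun x => ?_
        rw [← lintegral_const_mul' _ _ ENNReal.ofReal_ne_top]
        refine lintegral_congr fun y => ?_
        rw [← ENNReal.ofReal_mul (sq_nonneg _), mul_div_assoc]
    _ ≤ ∫⁻ x : R3, ENNReal.ofReal ((u x) ^ 2) * (2 * E) :=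
        lintegral_mono fun x => mul_le_mul_right (potential_le hu hE x) _
    _ = (∫⁻ x : R3, ENNReal.ofReal ((u x) ^ 2)) * (2 * E) := lintegral_mul_const _ hm
    _ ≤ E * (2 * E) := by
        gcongr ?_ * _
        refine lintegral_mono fun x => ENNReal.ofReal_le_ofReal ?_
        unfold eDens
        nlinarith [sq_nonneg ‖gradient u x‖]
    _ = ENNReal.ofReal 2 * E ^ 2 := by
        rw [ENNReal.ofReal_ofNat]; ring
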